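/- For every odd n ≥ 5, there exists δ > 0 such that for all ρ with 0 < ρ < δ, Stab_ρ(g_n) < Stab_ρ(Maj_n). In particular, g_n is a linear threshold function witnessing that the 'Majority is Least Stable' conjecture is false for every odd n ≥ 5. -/

import Mathlib

open Finset

namespace BKS

/-- sign function: 1 if z ≥ 0, -1 otherwise. -/
noncomputable def sgn (z : ℝ) : ℝ := if 0 ≤ z then 1 else -1

/-- encode Bool as the ±1 value of a bit. -/
def chi (b : Bool) : ℝ := if b then 1 else -1

/-- Fourier coefficient of f at S. -/
noncomputable def fourierCoeff {n : ℕ} (f : (Fin n → Bool) → ℝ) (S : Finset (Fin n)) : ℝ :=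
  (1 / 2 ^ n : ℝ) * ∑ x : Fin n → Bool, f x * ∏ i ∈ S, chi (x i)

/-- Fourier weight of f at level k: W^(k)[f]. -/
noncomputable def fourierWeight {n : ℕ} (k : ℕ) (f : (Fin n → Bool) → ℝ) : ℝ :=
  ∑ S ∈ Finset.univ.filter (fun S : Finset (Fin n) => S.card = k), (fourierCoeff f S) ^ 2

/-- Noise stability of f at ρ. -/
noncomputable def noiseStab {n : ℕ} (ρ : ℝ) (f : (Fin n → Bool) → ℝ) : ℝ :=
  ∑ k ∈ Finset.range (n + 1), ρ ^ k * fourierWeight k f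

/-- Majority function on n bits. -/
noncomputable def Maj (n : ℕ) : (Fin n → Bool) → ℝ := fun x => sgn (∑ i, chi (x i))

/-- The function g_n(x) = sgn(2(x_1 + ⋯ + x_{n-3}) + x_{n-2} + x_{n-1} + x_n). -/
noncomputable def gfun (n : ℕ) : (Fin n → Bool) → ℝ :=
  fun x => sgn (∑ i : Fin n, (if (i : ℕ) < n - 3 then (2 : ℝ) else 1) * chi (x i))

/-- f is a linear threshold function. -/
def IsLTF {n : ℕ} (f : (Fin n → Bool) → ℝ) : Prop :=
  ∃ (w0 : ℝ) (w : Fin n → ℝ), ∀ x, f x = sgn (w0 + ∑ i, w i * chi (x i))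



lemma chi_not (b : Bool) : chi (!b) = - chi b := by cases b <;> simp [chi]

lemma sum_chi_eq {m : ℕ} (y : Fin m → Bool) :
    ∑ i, chi (y i) = 2 * ((univ.filter (fun i => y i = true)).card : ℝ) - m := by
  have : ∀ i, chi (y i) = 2 * (if y i = true then (1 : ℝ) else 0) - 1 := by
    intro i; cases h : y i <;> simp [chi]; norm_num
  simp only [this, Finset.sum_sub_distrib, ← Finset.mul_sum, Finset.sum_boole]
  simp

lemma sum_chi_int {m : ℕ} (y : Fin m → Bool) :
    ∃ t : ℤ, ∑ i, chi (y i) = ((2 * t - m : ℤ) : ℝ) :=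
  ⟨((univ.filter (fun i => y i = true)).card : ℤ), by rw [sum_chi_eq]; push_cast; ring⟩

/-- number of balanced points -/
noncomputable def NN (m : ℕ) : ℝ :=
  ∑ y : Fin m → Bool, if ∑ i, chi (y i) = 0 then (1 : ℝ) else 0

lemma NN_even (k : ℕ) : NN (2 * k) = (Nat.centralBinom k : ℝ) := by
  unfold NN
  rw [Finset.sum_boole, Nat.centralBinom_eq_two_mul_choose]
  have h : (powersetCard k (univ : Finset (Fin (2 * k)))).card = (2 * k).choose k := by simp
  rw [← h]
  congr 1
  refine Finset.card_bij (fun y _ => univ.filter (fun i => y i = true)) ?_ ?_ ?_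
  · intro y hy
    simp only [mem_filter, mem_univ, true_and] at hy
    rw [sum_chi_eq] at hy
    simp only [mem_powersetCard, subset_univ, true_and]
    push_cast at hy
    have : ((univ.filter (fun i => y i = true)).card : ℝ) = k := by linarith
    exact_mod_cast this
  · intro y _ z _ hyz
    ext i
    have := congrArg (fun s => i ∈ s) hyz
    simp at this
    cases h1 : y i <;> cases h2 : z i <;> simp_all
  · intro s hs
    simp only [mem_powersetCard, subset_univ, true_and] at hs
    have e : univ.filter (fun i => decide (i ∈ s) = true) = s := by ext; simp
    refine ⟨fun i => decide (i ∈ s), ?_, e⟩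
    simp only [mem_filter, mem_univ, true_and]
    rw [sum_chi_eq, e, hs]
    push_cast; ring

lemma sum_insert {m : ℕ} (i : Fin (m + 1)) (F : (Fin (m + 1) → Bool) → ℝ) :
    ∑ x, F x = ∑ y : Fin m → Bool, (F (i.insertNth true y) + F (i.insertNth false y)) := by
  rw [← (Fin.insertNthEquiv (fun _ => Bool) i).sum_comp, Fintype.sum_prod_type]
  simp [Fin.insertNthEquiv, Finset.sum_add_distrib]

lemma sum_chi_insert {m : ℕ} (i : Fin (m + 1)) (b : Bool) (y : Fin m → Bool) :
    ∑ j, chi ((i.insertNth b y : Fin (m + 1) → Bool) j) = chi b + ∑ j, chi (y j) := by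
  rw [Fin.sum_univ_succAbove _ i]; simp

lemma sgn_pos {z : ℝ} (h : 0 < z) : sgn z = 1 := by simp [sgn, h.le]
lemma sgn_neg {z : ℝ} (h : z < 0) : sgn z = -1 := by simp [sgn, h]
lemma sgn_odd {z : ℝ} (h : z ≠ 0) : sgn (-z) = - sgn z := by
  rcases lt_or_gt_of_ne h with h | h
  · rw [sgn_neg h, sgn_pos (by linarith)]; norm_num
  · rw [sgn_pos h, sgn_neg (by linarith)]

lemma maj_coeff (k : ℕ) (i : Fin (2 * k + 1)) :
    fourierCoeff (Maj (2 * k + 1)) {i} = NN (2 * k) / 2 ^ (2 * k) := by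
  unfold fourierCoeff
  have : ∑ x : Fin (2 * k + 1) → Bool, Maj (2 * k + 1) x * ∏ i ∈ {i}, chi (x i)
      = 2 * NN (2 * k) := by
    simp only [Finset.prod_singleton]
    rw [sum_insert i, NN, Finset.mul_sum]
    refine Finset.sum_congr rfl fun y _ => ?_
    simp only [Maj, sum_chi_insert, Fin.insertNth_apply_same]
    obtain ⟨t, ht⟩ := sum_chi_int y
    rw [ht]
    simp only [chi, if_true, Bool.false_eq_true, if_false]
    rcases lt_trichotomy (t - k) 0 with h | h | h
    · have h' : (t : ℝ) - k ≤ -1 := by exact_mod_cast Int.le_sub_one_of_lt h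
      rw [sgn_neg (by push_cast; linarith), sgn_neg (by simp; linarith), if_neg]
      · simp
      · push_cast; intro h; linarith
    · have h' : (t : ℝ) - k = 0 := by exact_mod_cast h
      rw [sgn_pos (by push_cast; linarith), sgn_neg (by simp; linarith), if_pos]
      · norm_num
      · push_cast; linarith
    · have h' : (1 : ℝ) ≤ t - k := by exact_mod_cast h
      rw [sgn_pos (by push_cast; linarith), sgn_pos (by simp; linarith), if_neg]
      · simp
      · push_cast; intro h; linarith
  rw [this, pow_succ]
  field_simp

lemma sum_append {m p : ℕ} (F : (Fin (m + p) → Bool) → ℝ) :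
    ∑ x, F x = ∑ y : Fin m → Bool, ∑ z : Fin p → Bool, F (Fin.append y z) := by
  rw [← (Fin.appendEquiv m p).sum_comp, Fintype.sum_prod_type]
  rfl

lemma sum_three (F : (Fin 3 → Bool) → ℝ) :
    ∑ z, F z = F ![true, true, true] + F ![true, true, false] + F ![true, false, true]
      + F ![true, false, false] + F ![false, true, true] + F ![false, true, false]
      + F ![false, false, true] + F ![false, false, false] := by
  have : (univ : Finset (Fin 3 → Bool)) = {![true, true, true], ![true, true, false],
    ![true, false, true], ![true, false, false], ![false, true, true], ![false, true, false],
    ![false, false, true], ![false, false, false]} := by decide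
  rw [this]
  repeat rw [Finset.sum_insert (by decide)]
  rw [Finset.sum_singleton]; ring

lemma gfun_append {m : ℕ} (y : Fin m → Bool) (z : Fin 3 → Bool) :
    gfun (m + 3) (Fin.append y z) =
      sgn (2 * ∑ i, chi (y i) + (chi (z 0) + chi (z 1) + chi (z 2))) := by
  unfold gfun
  rw [Fin.sum_univ_add]
  simp [Fin.sum_univ_three, Finset.mul_sum]

/-- sum over the three light variables -/
noncomputable def GG (s : ℝ) : ℝ :=
  ∑ z : Fin 3 → Bool, sgn (2 * s + (chi (z 0) + chi (z 1) + chi (z 2)))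

lemma GG_zero : GG 0 = 0 := by
  unfold GG; rw [sum_three]
  simp [chi, sgn]; norm_num

lemma GG_pos {s : ℝ} (h : 2 ≤ s) : GG s = 8 := by
  unfold GG; rw [sum_three]
  simp only [chi, Matrix.cons_val]
  repeat rw [sgn_pos (by simp; linarith)]
  norm_num

lemma GG_neg {s : ℝ} (h : s ≤ -2) : GG s = -8 := by
  unfold GG; rw [sum_three]
  simp only [chi, Matrix.cons_val]
  repeat rw [sgn_neg (by simp; linarith)]
  norm_num

lemma light (k : ℕ) (j : Fin 3) (y : Fin (2 * k) → Bool) :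
    ∑ z : Fin 3 → Bool, sgn (2 * ∑ i, chi (y i) + (chi (z 0) + chi (z 1) + chi (z 2))) * chi (z j)
      = 4 * (if ∑ i, chi (y i) = 0 then (1 : ℝ) else 0) := by
  obtain ⟨t, ht⟩ := sum_chi_int y
  rw [ht, sum_three]
  push_cast
  rcases lt_trichotomy (t - k) 0 with h | h | h
  · have h' : (t : ℝ) - k ≤ -1 := by exact_mod_cast Int.le_sub_one_of_lt h
    rw [if_neg (by intro h; linarith)]
    simp only [chi, Matrix.cons_val]
    repeat rw [sgn_neg (by simp; linarith)]
    fin_cases j <;> simp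
  · have h' : 2 * (t : ℝ) - 2 * k = 0 := by
      have : (t : ℝ) - k = 0 := by exact_mod_cast h
      linarith
    rw [h', if_pos rfl]
    fin_cases j <;> simp [chi, sgn] <;> norm_num
  · have h' : (1 : ℝ) ≤ t - k := by exact_mod_cast h
    rw [if_neg (by intro h; linarith)]
    simp only [chi, Matrix.cons_val]
    repeat rw [sgn_pos (by simp; linarith)]
    fin_cases j <;> simp

lemma g_coeff_light (k : ℕ) (j : Fin 3) :
    fourierCoeff (gfun (2 * k + 3)) {Fin.natAdd (2 * k) j} = NN (2 * k) / 2 ^ (2 * k) / 2 := by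
  unfold fourierCoeff
  simp only [Finset.prod_singleton]
  rw [sum_append]
  simp only [gfun_append, Fin.append_right, light]
  rw [← Finset.mul_sum, ← NN, pow_add]
  field_simp
  norm_num

lemma g_coeff_heavy (k : ℕ) (i : Fin (2 * k)) :
    fourierCoeff (gfun (2 * k + 3)) {Fin.castAdd 3 i} = NN (2 * k) / 2 ^ (2 * k) := by
  unfold fourierCoeff
  simp only [Finset.prod_singleton]
  rw [sum_append]
  simp only [gfun_append, Fin.append_left]
  simp only [← Finset.sum_mul]
  have : ∑ y : Fin (2 * k) → Bool, GG (∑ i, chi (y i)) * chi (y i) = 8 * NN (2 * k) := by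
    obtain ⟨p, hp⟩ : ∃ p, 2 * k = (2 * p + 1) + 1 := by
      have := i.2
      exact ⟨k - 1, by omega⟩
    revert i
    rw [hp]
    intro i
    rw [sum_insert i, NN, sum_insert i, Finset.mul_sum]
    refine Finset.sum_congr rfl fun y _ => ?_
    simp only [sum_chi_insert, Fin.insertNth_apply_same]
    obtain ⟨t, ht⟩ := sum_chi_int y
    rw [ht]
    simp only [chi, if_true, Bool.false_eq_true, if_false]
    push_cast
    obtain ⟨q, rfl⟩ : ∃ q, t = q + p := ⟨t - p, by ring⟩
    have e1 : (1 : ℝ) + (2 * ((q + p : ℤ) : ℝ) - (2 * p + 1)) = 2 * q := by push_cast; ring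
    have e2 : (-1 : ℝ) + (2 * ((q + p : ℤ) : ℝ) - (2 * p + 1)) = 2 * (q - 1) := by
      push_cast; ring
    rw [e1, e2]
    rcases lt_trichotomy q 0 with h | h | h
    · have h' : (q : ℝ) ≤ -1 := by exact_mod_cast Int.le_sub_one_of_lt h
      rw [GG_neg (by linarith), GG_neg (by linarith), if_neg (by intro h; linarith),
        if_neg (by intro h; linarith)]
      norm_num
    · subst h
      rw [GG_neg (s := 2 * (((0 : ℤ) : ℝ) - 1)) (by norm_num)]
      simp [GG_zero]
    · rcases eq_or_lt_of_le (Int.add_one_le_of_lt h) with h | h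
      · have : q = 1 := by omega
        subst this
        rw [GG_pos (s := 2 * ((1 : ℤ) : ℝ)) (by norm_num)]
        simp [GG_zero]
      · have h' : (2 : ℝ) ≤ q := by
          have : 2 ≤ q := by omega
          exact_mod_cast this
        rw [GG_pos (by linarith), GG_pos (by linarith), if_neg (by intro h; linarith),
          if_neg (by intro h; linarith)]
        norm_num
  unfold GG at this
  rw [this, pow_add]
  field_simp
  norm_num

lemma weight_one {n : ℕ} (f : (Fin n → Bool) → ℝ) :
    fourierWeight 1 f = ∑ i, fourierCoeff f {i} ^ 2 := by
  unfold fourierWeight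
  have : (univ.filter (fun S : Finset (Fin n) => S.card = 1)) = powersetCard 1 univ := by
    ext; simp [mem_powersetCard]
  rw [this, Finset.powersetCard_one, Finset.sum_map]
  rfl

lemma weight_zero {n : ℕ} (f : (Fin n → Bool) → ℝ) (hf : ∀ x, f (fun i => !(x i)) = - f x) :
    fourierWeight 0 f = 0 := by
  have e : (univ.filter (fun S : Finset (Fin n) => S.card = 0)) = {∅} := by
    ext; simp
  unfold fourierWeight
  rw [e, Finset.sum_singleton]
  have hs : ∑ x, f x = 0 := by
    have hinv : Function.Involutive (fun (x : Fin n → Bool) => (fun i => !(x i))) := by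
      intro x; simp
    have h : ∑ x : Fin n → Bool, f (fun i => !(x i)) = ∑ x, f x :=
      Equiv.sum_comp (hinv.toPerm _) f
    simp only [hf, Finset.sum_neg_distrib] at h
    linarith
  simp [fourierCoeff, hs]

lemma maj_odd (k : ℕ) (x : Fin (2 * k + 1) → Bool) :
    Maj (2 * k + 1) (fun i => !(x i)) = - Maj (2 * k + 1) x := by
  unfold Maj
  simp only [chi_not, Finset.sum_neg_distrib]
  apply sgn_odd
  obtain ⟨t, ht⟩ := sum_chi_int x
  rw [ht]
  intro h
  have : 2 * t - ((2 * k + 1 : ℕ) : ℤ) = 0 := by exact_mod_cast h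
  omega

lemma g_odd (m : ℕ) (x : Fin (m + 3) → Bool) :
    gfun (m + 3) (fun i => !(x i)) = - gfun (m + 3) x := by
  unfold gfun
  simp only [chi_not, mul_neg, Finset.sum_neg_distrib]
  apply sgn_odd
  rw [Fin.sum_univ_add]
  simp only [Fin.val_castAdd, Fin.val_natAdd, Nat.add_sub_cancel, Fin.is_lt, if_true]
  rw [← Finset.mul_sum]
  obtain ⟨t, ht⟩ := sum_chi_int (fun i => x (Fin.castAdd 3 i))
  obtain ⟨u, hu⟩ := sum_chi_int (fun i => x (Fin.natAdd m i))
  simp only [Nat.not_lt.2 (Nat.le_add_right m _), if_false, one_mul]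
  rw [ht, hu]
  intro h
  have : 2 * (2 * t - (m : ℤ)) + (2 * u - ((3 : ℕ) : ℤ)) = 0 := by exact_mod_cast h
  omega

lemma weight_lt (k : ℕ) (hk : 1 ≤ k) :
    fourierWeight 1 (gfun (2 * k + 3)) < fourierWeight 1 (Maj (2 * k + 3)) := by
  rw [weight_one, weight_one, Fin.sum_univ_add]
  simp only [g_coeff_light, g_coeff_heavy]
  have hM : ∀ i, fourierCoeff (Maj (2 * k + 3)) {i} = NN (2 * (k + 1)) / 2 ^ (2 * (k + 1)) :=
    maj_coeff (k + 1)
  simp only [hM, Finset.sum_const, Finset.card_univ, Fintype.card_fin, nsmul_eq_mul]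
  rw [NN_even, NN_even]
  have hrec : ((k : ℝ) + 1) * (Nat.centralBinom (k + 1) : ℝ)
      = 2 * (2 * k + 1) * Nat.centralBinom k := by
    exact_mod_cast Nat.succ_mul_centralBinom_succ k
  have hpos : (0 : ℝ) < Nat.centralBinom k := by exact_mod_cast Nat.centralBinom_pos k
  have hk' : (1 : ℝ) ≤ k := by exact_mod_cast hk
  have e : (Nat.centralBinom (k + 1) : ℝ) / 2 ^ (2 * (k + 1)) =
      (Nat.centralBinom k / 2 ^ (2 * k)) * ((2 * k + 1) / (2 * k + 2)) := by
    have : (2 : ℝ) ^ (2 * (k + 1)) = 4 * 2 ^ (2 * k) := by ring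
    rw [this]
    field_simp
    linarith
  rw [e]
  set a : ℝ := Nat.centralBinom k / 2 ^ (2 * k) with ha
  have hapos : 0 < a := by positivity
  have key : (2 * k + 3 / 4 : ℝ) < (2 * k + 3) * ((2 * k + 1) / (2 * k + 2)) ^ 2 := by
    rw [div_pow, ← mul_div_assoc, lt_div_iff₀ (by positivity)]
    nlinarith
  have := mul_lt_mul_of_pos_left key (pow_pos hapos 2)
  push_cast
  nlinarith

lemma stab_lt {n : ℕ} (hn : 1 ≤ n) (f g : (Fin n → Bool) → ℝ) (hf : fourierWeight 0 f = 0)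
    (hg : fourierWeight 0 g = 0) (h : fourierWeight 1 f < fourierWeight 1 g) :
    ∃ δ : ℝ, 0 < δ ∧ ∀ ρ : ℝ, 0 < ρ → ρ < δ → noiseStab ρ f < noiseStab ρ g := by
  let q : ℝ → ℝ := fun ρ => ∑ k ∈ range n, ρ ^ k * (fourierWeight (k + 1) g - fourierWeight (k + 1) f)
  have hq : Continuous q := by fun_prop
  have hq0 : 0 < q 0 := by
    obtain ⟨p, rfl⟩ : ∃ p, n = p + 1 := ⟨n - 1, by omega⟩
    simp only [q]
    rw [Finset.sum_range_succ']
    simp [h]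
  obtain ⟨δ, hδ, H⟩ := Metric.eventually_nhds_iff.1 (hq.continuousAt.eventually (lt_mem_nhds hq0))
  refine ⟨δ, hδ, fun ρ h0 h1 => ?_⟩
  have h2 : 0 < q ρ := H (by simpa [abs_of_pos h0] using h1)
  have h3 : noiseStab ρ g - noiseStab ρ f = ρ * q ρ := by
    unfold noiseStab
    rw [Finset.sum_range_succ', Finset.sum_range_succ' _ n, hf, hg]
    simp only [q, Finset.mul_sum]
    rw [mul_zero, add_zero, add_zero, ← Finset.sum_sub_distrib]
    refine Finset.sum_congr rfl fun k _ => ?_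
    ring
  have := mul_pos h0 h2
  linarith

theorem stmt10 (n : ℕ) (hn : Odd n) (h5 : 5 ≤ n) :
    IsLTF (gfun n) ∧
    ∃ δ : ℝ, 0 < δ ∧ ∀ ρ : ℝ, 0 < ρ → ρ < δ →
      noiseStab ρ (gfun n) < noiseStab ρ (Maj n) := by
  refine ⟨⟨0, fun i => if (i : ℕ) < n - 3 then (2 : ℝ) else 1, fun x => by simp [gfun]⟩, ?_⟩
  obtain ⟨k, rfl⟩ : ∃ k, n = 2 * k + 3 := by
    obtain ⟨r, hr⟩ := hn
    exact ⟨r - 1, by omega⟩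
  exact stab_lt (by omega) _ _ (weight_zero _ (g_odd _)) (weight_zero _ (maj_odd (k + 1)))
    (weight_lt k (by omega))

end BKS
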